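/- arXiv:1512.05504 — 2 statements merged into one kernel-verified Lean document; each statement's English description precedes it below -/
import Mathlib

section
/- There exist a strict preference profile P on a set of 4 agents and two metric weight functions w_1 and w_2, both consistent with P, such that for every probability distribution p over the perfect matchings of the 4 agents, min( E_{M∼p}[w_1(M)] / OPT(w_1), E_{M∼p}[w_2(M)] / OPT(w_2) ) ≤ 4/5, where OPT(w_i) is the maximum weight of a perfect matching under w_i. Consequently, no randomized ordinal algorithm for Maximum Weighted Matching with metric weights can achieve an expected approximation factor better than 5/4. -/
/-- `P i j k` means agent `i` strictly prefers agent `j` to agent `k`. `P` is a strict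
preference profile if, for every agent `i`, `P i` is a strict total order on the other
agents. -/
def IsPrefProfile {V : Type*} (P : V → V → V → Prop) : Prop :=
  ∀ i : V,
    (∀ j k, P i j k → j ≠ i ∧ k ≠ i ∧ j ≠ k) ∧
    (∀ j k, j ≠ i → k ≠ i → j ≠ k → (P i j k ↔ ¬ P i k j)) ∧
    (∀ j k l, P i j k → P i k l → P i j l)

/-- `w` is consistent with the preference profile `P`: whenever `i` prefers `j` to `k`,
`w i j ≥ w i k`. -/
def Consistent {V : Type*} (P : V → V → V → Prop) (w : V → V → ℝ) : Prop :=
  ∀ i j k, P i j k → w i k ≤ w i j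

/-- A perfect matching encoded as a fixed-point-free involutive permutation. -/
def IsPM {V : Type*} (σ : Equiv.Perm V) : Prop :=
  (∀ x, σ (σ x) = x) ∧ ∀ x, σ x ≠ x

/-- The weight of the perfect matching `σ`: each edge is counted twice in the sum. -/
noncomputable def pmWeight {V : Type*} [Fintype V] (w : V → V → ℝ) (σ : Equiv.Perm V) : ℝ :=
  (∑ x, w x (σ x)) / 2

/-- `v` is the maximum weight of a perfect matching under `w`. -/
def IsOptVal {V : Type*} [Fintype V] (w : V → V → ℝ) (v : ℝ) : Prop :=
  (∃ σ : Equiv.Perm V, IsPM σ ∧ pmWeight w σ = v) ∧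
  ∀ σ : Equiv.Perm V, IsPM σ → pmWeight w σ ≤ v

/-!
Split the agents into two equal halves `S` and `Sᶜ` and let everybody rank all of `S` above all of
`Sᶜ`. The preferences cannot tell apart the weights that are `1` except for value `2` inside `S`
and the weights that are `1` except for value `0` inside `Sᶜ`. A matching has as many pairs inside
`S` as inside `Sᶜ`, so what it gains for the first weights it loses for the second: with `n` agents
its two weights add up to `n`. The optima are `3n/4` (match inside the halves) and `n/2` (match
across), so every distribution has one of its two ratios at most `n / (3n/4 + n/2) = 4/5`.
-/

theorem min_div_div_le_add_div_add {K : Type*} [Field K] [LinearOrder K] [IsStrictOrderedRing K]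
    {a b c d : K} (hb : 0 < b) (hd : 0 < d) : min (a / b) (c / d) ≤ (a + c) / (b + d) := by
  rw [le_div_iff₀ (add_pos hb hd), mul_add]
  gcongr
  · exact (le_div_iff₀ hb).mp (min_le_left _ _)
  · exact (le_div_iff₀ hd).mp (min_le_right _ _)

section CommonRanking

variable {V α : Type*}

/-- The preference profile in which all agents share the ranking `r`; a smaller value of `r` is
preferred. -/
def rankProfile [LT α] (r : V → α) (i j k : V) : Prop :=
  j ≠ i ∧ k ≠ i ∧ r j < r k

theorem isPrefProfile_rankProfile [LinearOrder α] {r : V → α} (hr : r.Injective) :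
    IsPrefProfile (rankProfile r) := by
  refine fun i ↦ ⟨?_, ?_, ?_⟩
  · rintro j k ⟨hj, hk, hjk⟩
    exact ⟨hj, hk, fun h ↦ hjk.ne (congrArg r h)⟩
  · intro j k hj hk hjk
    simp only [rankProfile, hj, hk, ne_eq, not_false_eq_true, true_and, not_lt]
    exact (hr.ne hjk).le_iff_lt.symm
  · rintro j k l ⟨hj, -, hjk⟩ ⟨-, hl, hkl⟩
    exact ⟨hj, hl, hjk.trans hkl⟩

end CommonRanking

section CliqueWeight

open Finset

variable {V : Type*} [DecidableEq V] {S : Finset V} {t : ℝ}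

/-- The weight function with value `1 + t` on pairs inside `S` and `1` on all other pairs. Its
values on the diagonal carry no meaning. -/
noncomputable def cliqueWeight (S : Finset V) (t : ℝ) (x y : V) : ℝ :=
  1 + if x ∈ S ∧ y ∈ S then t else 0

theorem cliqueWeight_nonneg (ht : -1 ≤ t) (x y : V) : 0 ≤ cliqueWeight S t x y := by
  unfold cliqueWeight
  split_ifs <;> linarith

theorem cliqueWeight_comm (x y : V) : cliqueWeight S t x y = cliqueWeight S t y x := by
  simp only [cliqueWeight, and_comm]

theorem cliqueWeight_triangle (ht : |t| ≤ 1) (x y z : V) :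
    cliqueWeight S t x y ≤ cliqueWeight S t x z + cliqueWeight S t z y := by
  obtain ⟨_, _⟩ := abs_le.mp ht
  unfold cliqueWeight
  split_ifs <;> first | linarith | tauto

section Consistency

variable {α : Type*} [LT α] {r : V → α}

theorem consistent_cliqueWeight_of_nonneg (ht : 0 ≤ t)
    (hS : ∀ ⦃j k⦄, r j < r k → k ∈ S → j ∈ S) :
    Consistent (rankProfile r) (cliqueWeight S t) := by
  rintro i j k ⟨-, -, hjk⟩
  have := hS hjk
  unfold cliqueWeight
  split_ifs <;> first | linarith | tauto

theorem consistent_cliqueWeight_of_nonpos (ht : t ≤ 0)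
    (hS : ∀ ⦃j k⦄, r j < r k → j ∈ S → k ∈ S) :
    Consistent (rankProfile r) (cliqueWeight S t) := by
  rintro i j k ⟨-, -, hjk⟩
  have := hS hjk
  unfold cliqueWeight
  split_ifs <;> first | linarith | tauto

end Consistency

variable [Fintype V] {σ : Equiv.Perm V}

theorem pmWeight_cliqueWeight (S : Finset V) (t : ℝ) (σ : Equiv.Perm V) :
    pmWeight (cliqueWeight S t) σ = (Fintype.card V + t * #{x ∈ S | σ x ∈ S}) / 2 := by
  have hfilter : ({x | x ∈ S ∧ σ x ∈ S} : Finset V) = {x ∈ S | σ x ∈ S} := by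
    ext x
    simp
  simp [pmWeight, cliqueWeight, sum_add_distrib, ← sum_filter, hfilter, mul_comm]

theorem isOptVal_cliqueWeight_of_nonneg (ht : 0 ≤ t) (hσ : IsPM σ)
    (hσS : ∀ x ∈ S, σ x ∈ S) :
    IsOptVal (cliqueWeight S t) ((Fintype.card V + t * #S) / 2) := by
  refine ⟨⟨σ, hσ, ?_⟩, fun τ _ ↦ ?_⟩
  · rw [pmWeight_cliqueWeight, filter_true_of_mem hσS]
  · rw [pmWeight_cliqueWeight]
    gcongr
    exact filter_subset _ _

theorem isOptVal_cliqueWeight_of_nonpos (ht : t ≤ 0) (hσ : IsPM σ)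
    (hσS : ∀ x ∈ S, σ x ∉ S) :
    IsOptVal (cliqueWeight S t) (Fintype.card V / 2) := by
  refine ⟨⟨σ, hσ, ?_⟩, fun τ _ ↦ ?_⟩
  · simp [pmWeight_cliqueWeight, filter_false_of_mem hσS]
  · rw [pmWeight_cliqueWeight]
    gcongr
    exact add_le_of_nonpos_right (mul_nonpos_of_nonpos_of_nonneg ht (Nat.cast_nonneg _))

theorem card_filter_mem_add_card_compl (S : Finset V) (σ : Equiv.Perm V) :
    #{x ∈ S | σ x ∈ S} + #Sᶜ = #{x ∈ Sᶜ | σ x ∈ Sᶜ} + #S := by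
  have hcompl : #{x ∈ Sᶜ | σ x ∈ S} + #{x ∈ Sᶜ | σ x ∈ Sᶜ} = #Sᶜ := by
    simpa only [mem_compl] using card_filter_add_card_filter_not (s := Sᶜ) (σ · ∈ S)
  have hpreimage : #{x ∈ S | σ x ∈ S} + #{x ∈ Sᶜ | σ x ∈ S} = #S := by
    rw [← card_union_of_disjoint (disjoint_filter_filter disjoint_compl_right), ← filter_union,
      union_compl]
    exact card_equiv σ (by simp)
  lia

theorem card_compl_eq_of_forall_mem_iff_notMem (hσ : ∀ x, σ x ∈ S ↔ x ∉ S) : #Sᶜ = #S := by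
  simpa [filter_false_of_mem, hσ] using card_filter_mem_add_card_compl S σ

theorem pmWeight_cliqueWeight_add_pmWeight_cliqueWeight_compl (hS : #Sᶜ = #S) (t : ℝ)
    (σ : Equiv.Perm V) :
    pmWeight (cliqueWeight S t) σ + pmWeight (cliqueWeight Sᶜ (-t)) σ = Fintype.card V := by
  have hinside : #{x ∈ S | σ x ∈ S} = #{x ∈ Sᶜ | σ x ∈ Sᶜ} := by
    have := card_filter_mem_add_card_compl S σ
    lia
  rw [pmWeight_cliqueWeight, pmWeight_cliqueWeight, hinside]
  ring

theorem min_expected_ratio_cliqueWeight_le [Nonempty V] (hS : #Sᶜ = #S)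
    {p : Equiv.Perm V → ℝ} (hp : ∑ σ, p σ = 1) :
    min ((∑ σ, p σ * pmWeight (cliqueWeight S 1) σ) / ((Fintype.card V + 1 * #S) / 2))
        ((∑ σ, p σ * pmWeight (cliqueWeight Sᶜ (-1)) σ) / (Fintype.card V / 2)) ≤ 4 / 5 := by
  have hhalf : (#S : ℝ) = Fintype.card V / 2 := by
    have h : #S + #Sᶜ = Fintype.card V := card_add_card_compl S
    rw [hS] at h
    rw [← h]
    push_cast
    ring
  have htotal : ∑ σ, p σ * pmWeight (cliqueWeight S 1) σ +
      ∑ σ, p σ * pmWeight (cliqueWeight Sᶜ (-1)) σ = Fintype.card V := by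
    simp only [← sum_add_distrib, ← mul_add,
      pmWeight_cliqueWeight_add_pmWeight_cliqueWeight_compl hS, ← sum_mul, hp, one_mul]
  refine (min_div_div_le_add_div_add (by positivity) (by positivity)).trans_eq ?_
  rw [htotal, hhalf]
  field_simp
  norm_num

end CliqueWeight

section Blocks

variable {V α β : Type*}

/-- The permutation of `V` that permutes the `β`-indexed blocks given by the identification
`e : V ≃ β × α` according to `τ`. -/
def blockPerm (e : V ≃ β × α) (τ : Equiv.Perm β) : Equiv.Perm V :=
  e.symm.permCongr (τ.prodCongr (Equiv.refl α))

theorem apply_blockPerm (e : V ≃ β × α) (τ : Equiv.Perm β) (x : V) :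
    e (blockPerm e τ x) = (τ (e x).1, (e x).2) := by
  simp [blockPerm, Equiv.permCongr_apply, Prod.map]

theorem isPM_blockPerm (e : V ≃ β × α) {τ : Equiv.Perm β} (hτ : IsPM τ) :
    IsPM (blockPerm e τ) := by
  refine ⟨fun x ↦ e.injective ?_, fun x hx ↦ hτ.2 (e x).1 ?_⟩
  · simp only [apply_blockPerm, hτ.1]
  · simpa only [apply_blockPerm] using congrArg (fun y ↦ (e y).1) hx

end Blocks

theorem exists_isPM_preserving_lower_half :
    ∃ τ : Equiv.Perm (Fin 4), IsPM τ ∧ ∀ a, τ a < 2 ↔ a < 2 :=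
  ⟨Equiv.swap 0 1 * Equiv.swap 2 3, by unfold IsPM; decide, by decide⟩

theorem exists_isPM_exchanging_halves :
    ∃ τ : Equiv.Perm (Fin 4), IsPM τ ∧ ∀ a, τ a < 2 ↔ ¬ a < 2 :=
  ⟨Equiv.swap 0 2 * Equiv.swap 1 3, by unfold IsPM; decide, by decide⟩

theorem exists_ranking_of_four_dvd_card {V : Type*} [Fintype V] (hV : 4 ∣ Fintype.card V) :
    ∃ (m : ℕ) (r : V → Fin 4 ×ₗ Fin m) (S : Finset V), r.Injective ∧
      (∀ ⦃j k⦄, r j < r k → k ∈ S → j ∈ S) ∧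
      (∃ σ : Equiv.Perm V, IsPM σ ∧ ∀ x, σ x ∈ S ↔ x ∈ S) ∧
      (∃ σ : Equiv.Perm V, IsPM σ ∧ ∀ x, σ x ∈ S ↔ x ∉ S) := by
  obtain ⟨m, hm⟩ := hV
  obtain ⟨e⟩ : Nonempty (V ≃ Fin 4 × Fin m) := Fintype.card_eq.mp (by simp [hm])
  obtain ⟨inner, hinner, hinner_half⟩ := exists_isPM_preserving_lower_half
  obtain ⟨cross, hcross, hcross_half⟩ := exists_isPM_exchanging_halves
  refine ⟨m, toLex ∘ e, ({x | (e x).1 < 2} : Finset V), toLex.injective.comp e.injective, ?_,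
    ⟨blockPerm e inner, isPM_blockPerm e hinner, ?_⟩,
    ⟨blockPerm e cross, isPM_blockPerm e hcross, ?_⟩⟩
  · intro j k hjk hk
    have hblock : (e j).1 ≤ (e k).1 := Prod.Lex.monotone_fst _ _ hjk.le
    simp only [Finset.mem_filter_univ] at hk ⊢
    exact hblock.trans_lt hk
  · simp [apply_blockPerm, hinner_half]
  · simp [apply_blockPerm, hcross_half]

theorem stmt_10_general {V : Type*} [Fintype V] [DecidableEq V] [Nonempty V]
    (hV : 4 ∣ Fintype.card V) :
    ∃ (P : V → V → V → Prop) (w1 w2 : V → V → ℝ) (opt1 opt2 : ℝ),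
      IsPrefProfile P ∧
      (∀ x y, 0 ≤ w1 x y) ∧ (∀ x y, w1 x y = w1 y x) ∧
      (∀ x y z : V, x ≠ y → y ≠ z → x ≠ z → w1 x y ≤ w1 x z + w1 z y) ∧
      Consistent P w1 ∧
      (∀ x y, 0 ≤ w2 x y) ∧ (∀ x y, w2 x y = w2 y x) ∧
      (∀ x y z : V, x ≠ y → y ≠ z → x ≠ z → w2 x y ≤ w2 x z + w2 z y) ∧
      Consistent P w2 ∧
      IsOptVal w1 opt1 ∧ IsOptVal w2 opt2 ∧
      ∀ p : Equiv.Perm V → ℝ,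
        (∀ σ, 0 ≤ p σ) → (∀ σ, ¬ IsPM σ → p σ = 0) → (∑ σ, p σ) = 1 →
        min ((∑ σ, p σ * pmWeight w1 σ) / opt1)
            ((∑ σ, p σ * pmWeight w2 σ) / opt2) ≤ 4 / 5 := by
  obtain ⟨m, r, S, hr, hlower, ⟨inner, hinner, hinnerS⟩, ⟨cross, hcross, hcrossS⟩⟩ :=
    exists_ranking_of_four_dvd_card hV
  have hupper : ∀ ⦃j k⦄, r j < r k → j ∈ Sᶜ → k ∈ Sᶜ := fun j k hjk ↦ by
    simpa only [Finset.mem_compl] using mt (hlower hjk)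
  exact ⟨rankProfile r, cliqueWeight S 1, cliqueWeight Sᶜ (-1), _, _,
    isPrefProfile_rankProfile hr,
    cliqueWeight_nonneg (by norm_num), cliqueWeight_comm,
    fun x y z _ _ _ ↦ cliqueWeight_triangle (by norm_num) x y z,
    consistent_cliqueWeight_of_nonneg zero_le_one hlower,
    cliqueWeight_nonneg le_rfl, cliqueWeight_comm,
    fun x y z _ _ _ ↦ cliqueWeight_triangle (by norm_num) x y z,
    consistent_cliqueWeight_of_nonpos (by norm_num) hupper,
    isOptVal_cliqueWeight_of_nonneg zero_le_one hinner fun x ↦ (hinnerS x).mpr,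
    isOptVal_cliqueWeight_of_nonpos (by norm_num) hcross (by simp [hcrossS]),
    fun _ _ _ hp ↦ min_expected_ratio_cliqueWeight_le
      (card_compl_eq_of_forall_mem_iff_notMem hcrossS) hp⟩

/-- there are a strict preference profile on 4 agents and two metric weight
functions `w₁, w₂` consistent with it such that every probability distribution `p` over
perfect matchings satisfies
`min (E_p[w₁(M)]/OPT(w₁)) (E_p[w₂(M)]/OPT(w₂)) ≤ 4/5`; hence no randomized ordinal
algorithm beats `5/4` for metric Maximum Weighted Matching. -/
theorem stmt_10 :
    ∃ (P : Fin 4 → Fin 4 → Fin 4 → Prop) (w1 w2 : Fin 4 → Fin 4 → ℝ) (opt1 opt2 : ℝ),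
      IsPrefProfile P ∧
      (∀ x y, 0 ≤ w1 x y) ∧ (∀ x y, w1 x y = w1 y x) ∧
      (∀ x y z : Fin 4, x ≠ y → y ≠ z → x ≠ z → w1 x y ≤ w1 x z + w1 z y) ∧
      Consistent P w1 ∧
      (∀ x y, 0 ≤ w2 x y) ∧ (∀ x y, w2 x y = w2 y x) ∧
      (∀ x y z : Fin 4, x ≠ y → y ≠ z → x ≠ z → w2 x y ≤ w2 x z + w2 z y) ∧
      Consistent P w2 ∧
      IsOptVal w1 opt1 ∧ IsOptVal w2 opt2 ∧
      ∀ p : Equiv.Perm (Fin 4) → ℝ,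
        (∀ σ, 0 ≤ p σ) → (∀ σ, ¬ IsPM σ → p σ = 0) → (∑ σ, p σ) = 1 →
        min ((∑ σ, p σ * pmWeight w1 σ) / opt1)
            ((∑ σ, p σ * pmWeight w2 σ) / opt2) ≤ 4 / 5 :=
  stmt_10_general (by simp)
end

section
/- Let w be metric weights on a finite set 𝒩, let k be an even integer with 2 ≤ k ≤ |𝒩|, let M be a matching on 𝒩 with k/2 edges and let S be the set of k points covered by M. Let M* be a maximum-weight matching on 𝒩 with k/2 edges, and suppose w(M*) ≤ α·w(M) for some α ≥ 1. Then for every subset O ⊆ 𝒩 with |O| = k, Σ_{ {x,y} ⊆ O } w(x,y) ≤ 2α · Σ_{ {x,y} ⊆ S } w(x,y). In particular, the vertex set of an α-approximate (k/2)-matching is a 2α-approximation for the Densest k-Subgraph problem. -/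
/-- A matching given as a list of `m` edges: each edge has distinct endpoints and
different edges are vertex-disjoint. -/
def IsMatching {V : Type*} {m : ℕ} (f : Fin m → V × V) : Prop :=
  (∀ i, (f i).1 ≠ (f i).2) ∧
  ∀ i j, i ≠ j →
    (f i).1 ≠ (f j).1 ∧ (f i).1 ≠ (f j).2 ∧ (f i).2 ≠ (f j).1 ∧ (f i).2 ≠ (f j).2

/-- The weight of a matching: the sum of the weights of its edges. -/
def mWeight {V : Type*} {m : ℕ} (w : V → V → ℝ) (f : Fin m → V × V) : ℝ :=
  ∑ i, w (f i).1 (f i).2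

/-!
For every vertex `v`, the triangle inequality through `v` bounds each edge of a matching by the two
segments joining its endpoints to `v`. Summed over the edges, the star at `v` weighs at least
`w(M)`; summed over the `2m` covered vertices `v`, the covered set has induced weight at least
`m·w(M)`.

Conversely, in a uniformly random perfect matching of a set `O` of `2m` points each of the
`m(2m - 1)` pairs occurs with probability `1 / (2m - 1)`, so some `m`-matching weighs at least
`1 / (2m - 1)` times the induced weight of `O`. The quotient
`(2m - 1) / m` of the two constants is the approximation factor `2 - 1/m ≤ 2`.
-/

section InducedWeight

open Finset

variable {V : Type*}

/-- The objective of Densest `k`-Subgraph: the total weight of the unordered pairs inside `S`,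
encoded for symmetric `w` as half the sum over ordered pairs of distinct points. -/
noncomputable def inducedWeight (w : V → V → ℝ) (S : Finset V) : ℝ :=
  (∑ p ∈ S.offDiag, w p.1 p.2) / 2

theorem inducedWeight_nonneg {w : V → V → ℝ} (hnonneg : ∀ x y, 0 ≤ w x y) (S : Finset V) :
    0 ≤ inducedWeight w S :=
  div_nonneg (sum_nonneg fun _ _ => hnonneg _ _) zero_le_two

theorem two_mul_inducedWeight_eq_sum_erase [DecidableEq V] (w : V → V → ℝ) (S : Finset V) :
    2 * inducedWeight w S = ∑ v ∈ S, ∑ x ∈ S.erase v, w v x := by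
  rw [inducedWeight, mul_div_cancel₀ _ two_ne_zero]
  refine sum_finset_product _ _ _ fun p => ?_
  grind

end InducedWeight

section CoveredPoints

open Finset

variable {V : Type*} [DecidableEq V] {m : ℕ} {f : Fin m → V × V}

/-- The vertex set covered by a family of edges. It is defined as a union of two-point sets, so
that it makes sense for infinite `V`. -/
def coveredPoints (f : Fin m → V × V) : Finset V :=
  univ.biUnion fun i => {(f i).1, (f i).2}

theorem coveredPoints_eq_filter [Fintype V] (f : Fin m → V × V) :
    coveredPoints f = univ.filter fun v : V => ∃ i, v = (f i).1 ∨ v = (f i).2 := by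
  ext v
  simp [coveredPoints]

theorem IsMatching.sum_coveredPoints {A : Type*} [AddCommMonoid A] (hf : IsMatching f)
    (h : V → A) : ∑ v ∈ coveredPoints f, h v = ∑ i, (h (f i).1 + h (f i).2) := by
  have edges_disjoint : (SetLike.coe (univ : Finset (Fin m))).PairwiseDisjoint
      fun i => ({(f i).1, (f i).2} : Finset V) := fun i _ j _ hij => by
    have := hf.2 i j hij
    grind [disjoint_left]
  rw [coveredPoints, sum_biUnion edges_disjoint]
  exact sum_congr rfl fun i _ => sum_pair (hf.1 i)

theorem IsMatching.card_coveredPoints (hf : IsMatching f) : #(coveredPoints f) = 2 * m := by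
  rw [card_eq_sum_ones, hf.sum_coveredPoints]
  simp [mul_comm]

variable {w : V → V → ℝ}

theorem IsMatching.mWeight_le_sum_erase (hsymm : ∀ x y, w x y = w y x)
    (hmetric : ∀ x y z : V, x ≠ y → y ≠ z → x ≠ z → w x y ≤ w x z + w z y)
    (hf : IsMatching f) (v : V) :
    mWeight w f ≤ ∑ x ∈ (coveredPoints f).erase v, w v x := by
  let star : V → ℝ := fun x => if x = v then 0 else w v x
  have edge_le_star (i : Fin m) : w (f i).1 (f i).2 ≤ star (f i).1 + star (f i).2 := by
    have hne := hf.1 i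
    have triangle := hmetric (f i).1 (f i).2 v hne
    grind
  calc
    mWeight w f ≤ ∑ i, (star (f i).1 + star (f i).2) := sum_le_sum fun i _ => edge_le_star i
    _ = ∑ x ∈ coveredPoints f, star x := (hf.sum_coveredPoints star).symm
    _ = ∑ x ∈ (coveredPoints f).erase v, star x := (sum_erase _ (by simp [star])).symm
    _ = ∑ x ∈ (coveredPoints f).erase v, w v x :=
      sum_congr rfl fun x hx => if_neg (ne_of_mem_erase hx)

theorem IsMatching.mul_mWeight_le_inducedWeight (hsymm : ∀ x y, w x y = w y x)
    (hmetric : ∀ x y z : V, x ≠ y → y ≠ z → x ≠ z → w x y ≤ w x z + w z y)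
    (hf : IsMatching f) :
    m * mWeight w f ≤ inducedWeight w (coveredPoints f) := by
  have sum_stars := card_nsmul_le_sum (coveredPoints f) _ _
    fun v _ => hf.mWeight_le_sum_erase hsymm hmetric v
  rw [← two_mul_inducedWeight_eq_sum_erase, hf.card_coveredPoints, nsmul_eq_mul] at sum_stars
  push_cast at sum_stars
  linarith

end CoveredPoints

section PermutationAveraging

open Finset

variable {κ A : Type*} [AddCommMonoid A]

theorem sum_offDiag_map {V : Type*} (u : κ ↪ V) (s : Finset κ) (c : V → V → A) :
    ∑ p ∈ (s.map u).offDiag, c p.1 p.2 = ∑ p ∈ s.offDiag, c (u p.1) (u p.2) := by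
  have offDiag_map : (s.map u).offDiag = s.offDiag.map (u.prodMap u) := by
    ext ⟨x, y⟩
    simp only [mem_offDiag, mem_map, Prod.exists, Function.Embedding.prodMap,
      Function.Embedding.coeFn_mk, Prod.map_apply, Prod.mk.injEq]
    grind
  rw [offDiag_map, sum_map]
  rfl

variable [Fintype κ]

theorem sum_offDiag_comp_perm (c : κ → κ → A) (σ : Equiv.Perm κ) :
    ∑ p ∈ (univ : Finset κ).offDiag, c (σ p.1) (σ p.2) =
      ∑ p ∈ (univ : Finset κ).offDiag, c p.1 p.2 := by
  simpa only [map_univ_equiv, Equiv.coe_toEmbedding] using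
    (sum_offDiag_map σ.toEmbedding univ c).symm

variable [DecidableEq κ]

theorem sum_perm_apply_eq_of_ne (c : κ → κ → A) {a b a' b' : κ} (hab : a ≠ b) (hab' : a' ≠ b') :
    ∑ σ : Equiv.Perm κ, c (σ a) (σ b) = ∑ σ : Equiv.Perm κ, c (σ a') (σ b') := by
  obtain ⟨τ, rfl, rfl⟩ := MulAction.is_two_pretransitive_iff.mp
    (Equiv.Perm.isMultiplyPretransitive κ 2) hab hab'
  exact (Equiv.sum_comp (Equiv.mulRight τ) fun σ : Equiv.Perm κ => c (σ a) (σ b)).symm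

theorem card_offDiag_nsmul_sum_perm_apply (c : κ → κ → A) {a b : κ} (hab : a ≠ b) :
    #(univ : Finset κ).offDiag • ∑ σ : Equiv.Perm κ, c (σ a) (σ b) =
      Fintype.card (Equiv.Perm κ) • ∑ p ∈ (univ : Finset κ).offDiag, c p.1 p.2 :=
  calc
    _ = ∑ p ∈ (univ : Finset κ).offDiag, ∑ σ : Equiv.Perm κ, c (σ p.1) (σ p.2) :=
      (sum_eq_card_nsmul fun _ hp =>
        sum_perm_apply_eq_of_ne c (mem_offDiag.mp hp).2.2 hab).symm
    _ = ∑ σ : Equiv.Perm κ, ∑ p ∈ (univ : Finset κ).offDiag, c (σ p.1) (σ p.2) := sum_comm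
    _ = _ := sum_eq_card_nsmul fun σ _ => sum_offDiag_comp_perm c σ

end PermutationAveraging

section Pairing

open Finset

variable {V : Type*} {m : ℕ}

/-- The edges joining `u (i, true)` to `u (i, false)`. As `u` runs through the enumerations of a
set of `2m` points by `Fin m × Bool`, this runs through its perfect matchings. -/
def pairing (u : Fin m × Bool → V) : Fin m → V × V :=
  fun i => (u (i, true), u (i, false))

theorem isMatching_pairing {u : Fin m × Bool → V} (hu : Function.Injective u) :
    IsMatching (pairing u) := by
  simp +contextual [IsMatching, pairing, hu.eq_iff]

theorem sum_perm_mWeight_pairing (w : V → V → ℝ) (u : Fin m × Bool ↪ V) :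
    (2 * m - 1) * ∑ σ : Equiv.Perm (Fin m × Bool), mWeight w (pairing (u ∘ σ)) =
      Fintype.card (Equiv.Perm (Fin m × Bool)) * inducedWeight w (univ.map u) := by
  rcases eq_or_ne m 0 with rfl | hm
  · simp [mWeight, inducedWeight]
  have card_offDiag : (#(univ : Finset (Fin m × Bool)).offDiag : ℝ) = 2 * m * (2 * m - 1) := by
    rw [offDiag_card, Nat.cast_sub (Nat.le_mul_self _), card_univ, Fintype.card_prod,
      Fintype.card_fin, Fintype.card_bool]
    push_cast
    ring
  have edge_average (i : Fin m) :
      2 * m * (2 * m - 1) * ∑ σ : Equiv.Perm (Fin m × Bool),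
          w (u (σ (i, true))) (u (σ (i, false))) =
        Fintype.card (Equiv.Perm (Fin m × Bool)) * (2 * inducedWeight w (univ.map u)) := by
    have hne : ((i, true) : Fin m × Bool) ≠ (i, false) := by simp
    rw [inducedWeight, mul_div_cancel₀ _ two_ne_zero, sum_offDiag_map, ← card_offDiag]
    simpa only [nsmul_eq_mul] using
      card_offDiag_nsmul_sum_perm_apply (fun a b => w (u a) (u b)) hne
  refine mul_left_cancel₀ (by positivity : (2 * m : ℝ) ≠ 0) ?_
  calc
    _ = ∑ i : Fin m, 2 * m * (2 * m - 1) * ∑ σ : Equiv.Perm (Fin m × Bool),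
          w (u (σ (i, true))) (u (σ (i, false))) := by
      rw [← mul_assoc, ← mul_sum, sum_comm]
      rfl
    _ = _ := by
      rw [sum_congr rfl fun i _ => edge_average i, sum_const, card_univ, Fintype.card_fin,
        nsmul_eq_mul]
      ring

theorem inducedWeight_le_of_forall_mWeight_le (hm : 1 ≤ m) {w : V → V → ℝ} {B : ℝ}
    (hB : ∀ g : Fin m → V × V, IsMatching g → mWeight w g ≤ B) {O : Finset V}
    (hO : #O = 2 * m) :
    inducedWeight w O ≤ (2 * m - 1) * B := by
  obtain ⟨u, rfl⟩ : ∃ u : Fin m × Bool ↪ V, univ.map u = O :=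
    Function.Embedding.exists_of_card_eq_finset (by simp [hO, mul_comm])
  have hm' : (1 : ℝ) ≤ m := by exact_mod_cast hm
  have sum_le : ∑ σ : Equiv.Perm (Fin m × Bool), mWeight w (pairing (u ∘ σ)) ≤
      Fintype.card (Equiv.Perm (Fin m × Bool)) * B := by
    rw [← nsmul_eq_mul]
    exact sum_le_card_nsmul _ _ _ fun σ _ =>
      hB _ (isMatching_pairing (u.injective.comp σ.injective))
  refine le_of_mul_le_mul_left ?_
    (Nat.cast_pos.mpr Fintype.card_pos : (0 : ℝ) < Fintype.card (Equiv.Perm (Fin m × Bool)))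
  calc
    _ = (2 * m - 1) * ∑ σ : Equiv.Perm (Fin m × Bool), mWeight w (pairing (u ∘ σ)) :=
      (sum_perm_mWeight_pairing w u).symm
    _ ≤ (2 * m - 1) * (Fintype.card (Equiv.Perm (Fin m × Bool)) * B) :=
      mul_le_mul_of_nonneg_left sum_le (by linarith)
    _ = _ := mul_left_comm _ _ _

end Pairing

theorem stmt_14_general {V : Type*} [DecidableEq V] {m : ℕ} (hm : 1 ≤ m) {w : V → V → ℝ}
    (hsymm : ∀ x y, w x y = w y x)
    (hmetric : ∀ x y z : V, x ≠ y → y ≠ z → x ≠ z → w x y ≤ w x z + w z y)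
    {f : Fin m → V × V} (hf : IsMatching f) {α : ℝ} (hα : 0 ≤ α)
    (happrox : ∀ g : Fin m → V × V, IsMatching g → mWeight w g ≤ α * mWeight w f)
    {O : Finset V} (hO : O.card = 2 * m) :
    inducedWeight w O ≤ (2 - 1 / m) * α * inducedWeight w (coveredPoints f) := by
  have hm' : (1 : ℝ) ≤ m := by exact_mod_cast hm
  have factor_nonneg : 0 ≤ (2 - 1 / m) * α :=
    mul_nonneg (by linarith [(div_le_one₀ (by linarith)).mpr hm']) hα
  calc
    inducedWeight w O ≤ (2 * m - 1) * (α * mWeight w f) :=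
      inducedWeight_le_of_forall_mWeight_le hm happrox hO
    _ = (2 - 1 / m) * α * (m * mWeight w f) := by field_simp
    _ ≤ (2 - 1 / m) * α * inducedWeight w (coveredPoints f) :=
      mul_le_mul_of_nonneg_left (hf.mul_mWeight_le_inducedWeight hsymm hmetric) factor_nonneg

/-- metric weights on `𝒩`, `k = 2m` even with `2 ≤ k ≤ |𝒩|`, `f` a matching
with `k/2 = m` edges covering the vertex set `S`, `g*` a maximum-weight `m`-matching with
`w(M*) ≤ α·w(M)` (`α ≥ 1`).  Then every `O ⊆ 𝒩` with `|O| = k` satisfies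
`Σ_{{x,y}⊆O} w ≤ 2α · Σ_{{x,y}⊆S} w`: the vertex set of an `α`-approximate
`(k/2)`-matching is a `2α`-approximation for Densest `k`-Subgraph. -/
theorem stmt_14 {V : Type*} [Fintype V] [DecidableEq V]
    (m : ℕ) (hm : 1 ≤ m) (hcard : 2 * m ≤ Fintype.card V)
    (w : V → V → ℝ)
    (hnonneg : ∀ x y, 0 ≤ w x y)
    (hsymm : ∀ x y, w x y = w y x)
    (hmetric : ∀ x y z : V, x ≠ y → y ≠ z → x ≠ z → w x y ≤ w x z + w z y)
    (f : Fin m → V × V) (hf : IsMatching f)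
    (gstar : Fin m → V × V) (hgstar : IsMatching gstar)
    (hmax : ∀ g : Fin m → V × V, IsMatching g → mWeight w g ≤ mWeight w gstar)
    (α : ℝ) (hα : 1 ≤ α) (happrox : mWeight w gstar ≤ α * mWeight w f) :
    ∀ O : Finset V, O.card = 2 * m →
      (∑ p ∈ O.offDiag, w p.1 p.2) / 2
        ≤ 2 * α * ((∑ p ∈ (Finset.univ.filter
            (fun v : V => ∃ i, v = (f i).1 ∨ v = (f i).2)).offDiag, w p.1 p.2) / 2) := by
  intro O hO
  rw [← coveredPoints_eq_filter]
  have hα₀ : 0 ≤ α := zero_le_one.trans hα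
  have factor_le : (2 - 1 / m) * α ≤ 2 * α := by gcongr; exact sub_le_self _ (by positivity)
  exact (stmt_14_general hm hsymm hmetric hf hα₀ (fun g hg => (hmax g hg).trans happrox) hO).trans
    (mul_le_mul_of_nonneg_right factor_le (inducedWeight_nonneg hnonneg _))
end
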